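/- arXiv:1903.01174 — 2 statements merged into one kernel-verified Lean document; each statement's English description precedes it below -/
import Mathlib

section
/- Let U ⊆ ℂ be an open set and let F : U → ℝ be a C^∞-smooth function such that F_{zz̄} is nowhere vanishing on U. Define μ := F_{zz̄z̄} / F_{zz̄} on U, and suppose μ satisfies μ_{zz̄z̄} − 3·μ_{zz̄}·μ + 2·μ_z·μ² − μ_z·μ_{z̄} = 0 at every point of U. Then F is real-analytic on U. -/
open Complex

/-- The Wirtinger derivative `g_z = (1/2)(∂g/∂x - i ∂g/∂y)` of a function `g : ℂ → ℂ`,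
computed from the real Fréchet derivative. -/
noncomputable def wirtingerZ (g : ℂ → ℂ) : ℂ → ℂ :=
  fun z => (1 / 2 : ℂ) * (fderiv ℝ g z 1 - Complex.I * fderiv ℝ g z Complex.I)

/-- The conjugate Wirtinger derivative `g_z̄ = (1/2)(∂g/∂x + i ∂g/∂y)`. -/
noncomputable def wirtingerZbar (g : ℂ → ℂ) : ℂ → ℂ :=
  fun z => (1 / 2 : ℂ) * (fderiv ℝ g z 1 + Complex.I * fderiv ℝ g z Complex.I)

/-!
The function `h = F_{zz̄}` is the conformal factor of a metric `h |dz|²` with `μ = (log h)_z̄`, and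
Loboda's equation says exactly that the `(1, 0)`-gradient `a` of its curvature
`s = (log h)_{zz̄} / h` is holomorphic, i.e. that the metric is extremal in the sense of Calabi.
Integrating twice gives `a' + a (log h)_z = s² / 2 + c` and `h |a|² = P(s)` for a cubic
`P = w³ / 6 + c w + d`, so that `a s_z = P(s)`: the map `s` intertwines two holomorphic vector
fields.

If `a(z₀) ≠ 0` or `P` has a simple zero at `s(z₀)`, linearising both fields shows that `s` is
analytic; and if `ψ' = (w - s(z₀)) / P(w)`, then `ψ ∘ s` has mixed derivative `h`, so that `F`
differs from it by a harmonic function. If `P` has a double zero at `s(z₀)`, Grönwall's inequality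
forces `s` to be a constant `k`. Then `h ^ (-1 / 2)` solves a second order linear equation with
holomorphic coefficients, hence `log h` is analytic, and `k⁻¹ log h` has mixed derivative `h`; for
`k = 0` the factor `h` is the product of a holomorphic and an antiholomorphic function and is
integrated directly.
-/

section WirtingerCalculus

open Filter Topology ComplexConjugate

/-- `f` is real differentiable at `z` with differential `p dz + q dz̄`, that is, with
`f_z = p` and `f_z̄ = q`. -/
def HasWirtingerDerivAt (f : ℂ → ℂ) (p q z : ℂ) : Prop :=
  HasFDerivAt f (p • ContinuousLinearMap.id ℝ ℂ + q • (conjCLE : ℂ →L[ℝ] ℂ)) z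

theorem clm_eq_wirtinger_combination (L : ℂ →L[ℝ] ℂ) :
    L = ((1 / 2 : ℂ) * (L 1 - I * L I)) • ContinuousLinearMap.id ℝ ℂ
      + ((1 / 2 : ℂ) * (L 1 + I * L I)) • (conjCLE : ℂ →L[ℝ] ℂ) := by
  ext w
  have hL : L w = w.re * L 1 + w.im * L I := by
    conv_lhs => rw [show w = w.re • (1 : ℂ) + w.im • I by simp]
    rw [map_add, map_smul, map_smul, real_smul, real_smul]
  have hconj : conj w = w.re - w.im * I := by apply Complex.ext <;> simp
  simp only [hL, add_apply, smul_apply, ContinuousLinearMap.id_apply,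
    ContinuousLinearEquiv.coe_coe, conjCLE_apply, smul_eq_mul, hconj]
  linear_combination (w.im * L I) * I_mul_I + (1 / 2 : ℂ) * (L 1 - I * L I) * re_add_im w

namespace HasWirtingerDerivAt

variable {f g : ℂ → ℂ} {p q p' q' z : ℂ}

theorem of_differentiableAt (hf : DifferentiableAt ℝ f z) :
    HasWirtingerDerivAt f (wirtingerZ f z) (wirtingerZbar f z) z :=
  hf.hasFDerivAt.congr_fderiv (clm_eq_wirtinger_combination _)

theorem of_hasDerivAt {f' : ℂ} (hf : HasDerivAt f f' z) : HasWirtingerDerivAt f f' 0 z :=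
  (hf.hasFDerivAt.restrictScalars ℝ).congr_fderiv (by ext w; simp [mul_comm])

theorem differentiableAt (hf : HasWirtingerDerivAt f p q z) : DifferentiableAt ℝ f z :=
  HasFDerivAt.differentiableAt hf

theorem wirtingerZ_eq (hf : HasWirtingerDerivAt f p q z) : wirtingerZ f z = p := by
  rw [wirtingerZ, HasFDerivAt.fderiv hf]
  simp only [add_apply, smul_apply, ContinuousLinearMap.id_apply, ContinuousLinearEquiv.coe_coe,
    conjCLE_apply, smul_eq_mul, map_one, conj_I]
  linear_combination (-p + q) / 2 * I_mul_I

theorem wirtingerZbar_eq (hf : HasWirtingerDerivAt f p q z) : wirtingerZbar f z = q := by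
  rw [wirtingerZbar, HasFDerivAt.fderiv hf]
  simp only [add_apply, smul_apply, ContinuousLinearMap.id_apply, ContinuousLinearEquiv.coe_coe,
    conjCLE_apply, smul_eq_mul, map_one, conj_I]
  linear_combination (p - q) / 2 * I_mul_I

theorem congr_of_eventuallyEq (hf : HasWirtingerDerivAt f p q z) (hg : g =ᶠ[𝓝 z] f) :
    HasWirtingerDerivAt g p q z :=
  HasFDerivAt.congr_of_eventuallyEq hf hg

theorem congr_deriv (hf : HasWirtingerDerivAt f p q z) (hp : p = p') (hq : q = q') :
    HasWirtingerDerivAt f p' q' z :=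
  hp ▸ hq ▸ hf

theorem sub (hf : HasWirtingerDerivAt f p q z) (hg : HasWirtingerDerivAt g p' q' z) :
    HasWirtingerDerivAt (fun w => f w - g w) (p - p') (q - q') z :=
  (HasFDerivAt.fun_sub hf hg).congr_fderiv (by ext w; simp; ring)

theorem add (hf : HasWirtingerDerivAt f p q z) (hg : HasWirtingerDerivAt g p' q' z) :
    HasWirtingerDerivAt (fun w => f w + g w) (p + p') (q + q') z :=
  (HasFDerivAt.fun_add hf hg).congr_fderiv (by ext w; simp; ring)

theorem mul (hf : HasWirtingerDerivAt f p q z) (hg : HasWirtingerDerivAt g p' q' z) :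
    HasWirtingerDerivAt (fun w => f w * g w) (p * g z + f z * p') (q * g z + f z * q') z :=
  (HasFDerivAt.mul hf hg).congr_fderiv (by ext w; simp; ring)

theorem const_mul (c : ℂ) (hf : HasWirtingerDerivAt f p q z) :
    HasWirtingerDerivAt (fun w => c * f w) (c * p) (c * q) z :=
  (HasFDerivAt.const_mul hf c).congr_fderiv (by ext w; simp; ring)

theorem star (hf : HasWirtingerDerivAt f p q z) :
    HasWirtingerDerivAt (fun w => conj (f w)) (conj q) (conj p) z :=
  (HasFDerivAt.comp z (conjCLE : ℂ →L[ℝ] ℂ).hasFDerivAt hf).congr_fderiv (by ext w; simp; ring)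

theorem hasDerivAt_comp {φ : ℂ → ℂ} {φ' : ℂ} (hf : HasWirtingerDerivAt f p q z)
    (hφ : HasDerivAt φ φ' (f z)) :
    HasWirtingerDerivAt (fun w => φ (f w)) (φ' * p) (φ' * q) z :=
  (HasFDerivAt.comp z (hφ.hasFDerivAt.restrictScalars ℝ) hf).congr_fderiv (by ext w; simp; ring)

theorem div (hf : HasWirtingerDerivAt f p q z) (hg : HasWirtingerDerivAt g p' q' z)
    (hz : g z ≠ 0) :
    HasWirtingerDerivAt (fun w => f w / g w) ((p * g z - f z * p') / g z ^ 2)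
      ((q * g z - f z * q') / g z ^ 2) z := by
  simp only [div_eq_mul_inv]
  exact (hf.mul (hg.hasDerivAt_comp (hasDerivAt_inv hz))).congr_deriv
    (by field_simp; ring) (by field_simp; ring)

theorem hasDerivAt (hf : HasWirtingerDerivAt f p 0 z) : HasDerivAt f p z :=
  hasDerivAt_iff_hasFDerivAt.2 <| hasFDerivAt_of_restrictScalars ℝ hf (by ext w; simp [mul_comm])

theorem eq_conj_of_conj_eq (hf : HasWirtingerDerivAt f p q z)
    (hreal : ∀ᶠ w in 𝓝 z, conj (f w) = f w) : q = conj p := by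
  have hconj := hf.star.congr_of_eventuallyEq (hreal.mono fun _ hw => hw.symm)
  rw [← hf.wirtingerZbar_eq, hconj.wirtingerZbar_eq]

end HasWirtingerDerivAt

theorem contDiffAt_wirtingerZ {f : ℂ → ℂ} {z : ℂ} {m n : WithTop ℕ∞} (hf : ContDiffAt ℝ n f z)
    (hmn : m + 1 ≤ n) : ContDiffAt ℝ m (wirtingerZ f) z := by
  have := hf.fderiv_right hmn
  unfold wirtingerZ
  fun_prop

theorem contDiffAt_wirtingerZbar {f : ℂ → ℂ} {z : ℂ} {m n : WithTop ℕ∞}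
    (hf : ContDiffAt ℝ n f z) (hmn : m + 1 ≤ n) : ContDiffAt ℝ m (wirtingerZbar f) z := by
  have := hf.fderiv_right hmn
  unfold wirtingerZbar
  fun_prop

theorem hasFDerivAt_fderiv_apply {f : ℂ → ℂ} {z : ℂ} (hf : ContDiffAt ℝ 2 f z) (v : ℂ) :
    HasFDerivAt (fun w => fderiv ℝ f w v) ((fderiv ℝ (fderiv ℝ f) z).flip v) z := by
  have hd : DifferentiableAt ℝ (fderiv ℝ f) z :=
    (hf.fderiv_right (m := 1) (by norm_num)).differentiableAt (by simp)
  simpa using hd.hasFDerivAt.clm_apply (hasFDerivAt_const v z)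

theorem wirtingerZ_wirtingerZbar_comm {f : ℂ → ℂ} {z : ℂ} (hf : ContDiffAt ℝ 2 f z) :
    wirtingerZ (wirtingerZbar f) z = wirtingerZbar (wirtingerZ f) z := by
  have hx := hasFDerivAt_fderiv_apply hf 1
  have hy := hasFDerivAt_fderiv_apply hf I
  have hZbar := (hx.fun_add (hy.const_mul I)).const_mul (1 / 2)
  have hZ := (hx.fun_sub (hy.const_mul I)).const_mul (1 / 2)
  have hsymm := (hf.isSymmSndFDerivAt (by simp)).eq 1 I
  unfold wirtingerZ wirtingerZbar
  simp only [hZbar.fderiv, hZ.fderiv, add_apply, sub_apply, smul_apply,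
    ContinuousLinearMap.flip_apply, smul_eq_mul, hsymm]
  ring

variable {f g p q : ℂ → ℂ} {z₀ : ℂ}

theorem mixed_wirtinger_eq {p₁ p₂ q₁ q₂ : ℂ} (hf : ContDiffAt ℝ 2 f z₀)
    (hfpq : ∀ᶠ z in 𝓝 z₀, HasWirtingerDerivAt f (p z) (q z) z)
    (hp : HasWirtingerDerivAt p p₁ p₂ z₀) (hq : HasWirtingerDerivAt q q₁ q₂ z₀) : p₂ = q₁ := by
  have hZ : wirtingerZ f =ᶠ[𝓝 z₀] p := hfpq.mono fun _ hz => hz.wirtingerZ_eq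
  have hZbar : wirtingerZbar f =ᶠ[𝓝 z₀] q := hfpq.mono fun _ hz => hz.wirtingerZbar_eq
  rw [← (hp.congr_of_eventuallyEq hZ).wirtingerZbar_eq,
    ← (hq.congr_of_eventuallyEq hZbar).wirtingerZ_eq, wirtingerZ_wirtingerZbar_comm hf]

theorem eventually_eq_const_of_hasWirtingerDerivAt_zero
    (hf : ∀ᶠ z in 𝓝 z₀, HasWirtingerDerivAt f 0 0 z) : ∀ᶠ z in 𝓝 z₀, f z = f z₀ := by
  obtain ⟨r, hr, hball⟩ := Metric.eventually_nhds_iff_ball.1 hf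
  filter_upwards [Metric.ball_mem_nhds z₀ hr] with z hz
  exact (convex_ball z₀ r).is_const_of_fderivWithin_eq_zero (𝕜 := ℝ)
    (fun w hw => (hball w hw).differentiableAt.differentiableWithinAt)
    (fun w hw => by
      rw [fderivWithin_of_isOpen Metric.isOpen_ball hw, HasFDerivAt.fderiv (hball w hw)]
      ext v
      simp)
    hz (Metric.mem_ball_self hr)

theorem analyticAt_of_eventually_hasDerivAt {f' : ℂ → ℂ}
    (hf : ∀ᶠ z in 𝓝 z₀, HasDerivAt f (f' z) z) : AnalyticAt ℂ f z₀ :=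
  analyticAt_iff_eventually_differentiableAt.2 (hf.mono fun _ hz => hz.differentiableAt)

theorem analyticAt_conj (hf : AnalyticAt ℝ f z₀) : AnalyticAt ℝ (fun z => conj (f z)) z₀ :=
  ((conjCLE : ℂ →L[ℝ] ℂ).analyticAt _).comp hf

theorem analyticAt_of_antiholomorphic
    (hf : ∀ᶠ z in 𝓝 z₀, HasWirtingerDerivAt f 0 (q z) z) : AnalyticAt ℝ f z₀ := by
  have hconj : AnalyticAt ℂ (fun z => conj (f z)) z₀ :=
    analyticAt_of_eventually_hasDerivAt (f' := fun z => conj (q z)) <| hf.mono fun z hz =>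
      (hz.star.congr_deriv rfl (map_zero _)).hasDerivAt
  simpa using analyticAt_conj hconj.restrictScalars

theorem eventually_eq_const_of_real_of_holomorphic
    (hreal : ∀ᶠ z in 𝓝 z₀, conj (f z) = f z)
    (hf : ∀ᶠ z in 𝓝 z₀, HasWirtingerDerivAt f (p z) 0 z) : ∀ᶠ z in 𝓝 z₀, f z = f z₀ := by
  refine eventually_eq_const_of_hasWirtingerDerivAt_zero ?_
  filter_upwards [hreal.eventually_nhds, hf] with z hz hfz
  have hp : p z = 0 := by simpa using (hfz.eq_conj_of_conj_eq hz).symm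
  exact hfz.congr_deriv hp rfl

theorem exists_eventually_hasDerivAt_of_analyticAt {E : Type*} [NormedAddCommGroup E]
    [NormedSpace ℂ E] [CompleteSpace E] {f : ℂ → E} (hf : AnalyticAt ℂ f z₀) (y : E) :
    ∃ φ : ℂ → E, φ z₀ = y ∧ ∀ᶠ z in 𝓝 z₀, HasDerivAt φ (f z) z := by
  obtain ⟨r, hr, hball⟩ := Metric.eventually_nhds_iff_ball.1 hf.eventually_analyticAt
  have hdiff : DifferentiableOn ℂ f (Metric.ball z₀ r) :=
    fun z hz => (hball z hz).differentiableAt.differentiableWithinAt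
  obtain ⟨φ, hφ₀, hφ⟩ := hdiff.isExactOn_ball.with_val_at z₀ y
  exact ⟨φ, hφ₀, eventually_of_mem (Metric.ball_mem_nhds z₀ hr) hφ⟩

theorem analyticAt_of_mixed_wirtinger_eq {r : ℂ → ℂ} (hf : ContDiffAt ℝ 2 f z₀)
    (hg : AnalyticAt ℝ g z₀) (hgp : ∀ᶠ z in 𝓝 z₀, HasWirtingerDerivAt g (p z) (q z) z)
    (hp : ∀ᶠ z in 𝓝 z₀, HasWirtingerDerivAt p (r z) (wirtingerZbar (wirtingerZ f) z) z) :
    AnalyticAt ℝ f z₀ := by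
  have hsmooth := hf.eventually (by simp)
  have hhol : AnalyticAt ℂ (fun z => wirtingerZ f z - p z) z₀ := by
    refine analyticAt_of_eventually_hasDerivAt (f' := fun z => wirtingerZ (wirtingerZ f) z - r z) ?_
    filter_upwards [hsmooth, hp] with z hfz hpz
    have hd := (contDiffAt_wirtingerZ (m := 1) hfz (by norm_num)).differentiableAt (by simp)
    exact (((HasWirtingerDerivAt.of_differentiableAt hd).sub hpz).congr_deriv rfl
      (sub_self _)).hasDerivAt
  obtain ⟨φ, -, hφ⟩ := exists_eventually_hasDerivAt_of_analyticAt hhol 0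
  have hanti : AnalyticAt ℝ (fun z => f z - g z - φ z) z₀ := by
    refine analyticAt_of_antiholomorphic (q := fun z => wirtingerZbar f z - q z) ?_
    filter_upwards [hsmooth, hgp, hφ] with z hfz hgz hφz
    have hfz' := HasWirtingerDerivAt.of_differentiableAt (hfz.differentiableAt (by simp))
    exact ((hfz'.sub hgz).sub (.of_hasDerivAt hφz)).congr_deriv (sub_self _) (sub_zero _)
  simpa using
    (hanti.fun_add (analyticAt_of_eventually_hasDerivAt hφ).restrictScalars).fun_add hg

theorem analyticAt_of_analyticAt_comp {Q : ℂ → ℂ} (hQ : AnalyticAt ℂ Q (g z₀))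
    (hQ' : deriv Q (g z₀) ≠ 0) (hg : ContinuousAt g z₀)
    (hQg : AnalyticAt ℝ (fun z => Q (g z)) z₀) : AnalyticAt ℝ g z₀ :=
  ((hQ.analyticAt_localInverse hQ').restrictScalars.comp_of_eq hQg rfl).congr
    (hg.eventually (hQ.hasStrictDerivAt.eventually_left_inverse hQ'))

theorem analyticAt_dslope {a : ℂ → ℂ} (ha : AnalyticAt ℂ a z₀) :
    AnalyticAt ℂ (dslope a z₀) z₀ :=
  let ⟨_, ha⟩ := ha
  ⟨_, ha.has_fpower_series_dslope_fslope⟩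

/- The linearising coordinate is sought as `W = (z - z₀) exp E`. With `b = dslope a z₀`, the
equation becomes `E' = - (dslope b z₀) / b`. -/
theorem exists_linearizing_coordinate {a : ℂ → ℂ} (ha : AnalyticAt ℂ a z₀) (ha₀ : a z₀ = 0)
    (ha' : deriv a z₀ ≠ 0) :
    ∃ W : ℂ → ℂ, AnalyticAt ℂ W z₀ ∧ deriv W z₀ ≠ 0 ∧
      ∀ᶠ z in 𝓝 z₀, a z * deriv W z = deriv a z₀ * W z := by
  set b := dslope a z₀
  have hban : AnalyticAt ℂ b z₀ := analyticAt_dslope ha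
  have hb₀ : b z₀ = deriv a z₀ := dslope_same a z₀
  have hbne : b z₀ ≠ 0 := hb₀ ▸ ha'
  have ha_eq (z : ℂ) : (z - z₀) * b z = a z := by
    simpa [ha₀] using sub_smul_dslope a z₀ z
  have hb_eq (z : ℂ) : (z - z₀) * dslope b z₀ z = b z - deriv a z₀ := by
    simpa only [smul_eq_mul, hb₀] using sub_smul_dslope b z₀ z
  obtain ⟨E, -, hE⟩ := exists_eventually_hasDerivAt_of_analyticAt
    ((analyticAt_dslope hban).neg.div hban hbne) 0
  have hW : ∀ᶠ z in 𝓝 z₀, HasDerivAt (fun z => (z - z₀) * exp (E z))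
      (exp (E z) * (deriv a z₀ / b z)) z := by
    filter_upwards [hE, hban.continuousAt.eventually_ne hbne] with z hEz hbz
    refine (((hasDerivAt_id z).sub_const z₀).mul hEz.cexp).congr_deriv ?_
    simp only [id_eq, Pi.div_apply, Pi.neg_apply]
    field_simp
    linear_combination -hb_eq z
  refine ⟨_, analyticAt_of_eventually_hasDerivAt hW, ?_, ?_⟩
  · simp [hW.self_of_nhds.deriv, hb₀, ha']
  · filter_upwards [hW, hban.continuousAt.eventually_ne hbne] with z hWz hbz
    rw [hWz.deriv, ← ha_eq z]
    field_simp

/- The quotient `p / W'` is continuous, and off the zero of `W` it equals `f / W`, whose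
`z`-derivative vanishes; so it is antiholomorphic by removability of the singularity. -/
theorem analyticAt_of_mul_wirtingerZ_eq {W : ℂ → ℂ} (hW : AnalyticAt ℂ W z₀)
    (hW' : deriv W z₀ ≠ 0) (hf : ∀ᶠ z in 𝓝 z₀, HasWirtingerDerivAt f (p z) (q z) z)
    (hp : ContinuousAt p z₀) (hWp : ∀ᶠ z in 𝓝 z₀, W z * p z = deriv W z * f z) :
    AnalyticAt ℝ f z₀ := by
  have hne' : ∀ᶠ z in 𝓝 z₀, deriv W z ≠ 0 := hW.deriv.continuousAt.eventually_ne hW'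
  have hquot : ∀ᶠ z in 𝓝 z₀, W z ≠ 0 → p z / deriv W z = f z / W z := by
    filter_upwards [hWp, hne'] with z hz hWz' hWz
    rw [div_eq_div_iff hWz' hWz]
    linear_combination hz
  have hanti : AnalyticAt ℂ (fun z => conj (p z / deriv W z)) z₀ := by
    refine analyticAt_of_differentiable_on_punctured_nhds_of_continuousAt ?_
      (continuous_conj.continuousAt.comp (hp.div hW.deriv.continuousAt hW'))
    filter_upwards [hW.differentiableAt.hasDerivAt.eventually_ne (c := 0) hW',
      eventually_nhdsWithin_of_eventually_nhds hW.eventually_analyticAt,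
      eventually_nhdsWithin_of_eventually_nhds hquot.eventually_nhds,
      eventually_nhdsWithin_of_eventually_nhds hf,
      eventually_nhdsWithin_of_eventually_nhds hWp] with z hWz hWan hz hfz hWpz
    have hfW := (hfz.div (.of_hasDerivAt hWan.differentiableAt.hasDerivAt)
      hWz).congr_of_eventuallyEq
        (hWan.continuousAt.eventually_ne hWz |>.mp hz)
    have hzero : (p z * W z - f z * deriv W z) / W z ^ 2 = 0 := by
      rw [div_eq_zero_iff]
      exact .inl (by linear_combination hWpz)
    exact (hfW.star.congr_deriv rfl (by rw [hzero, map_zero])).hasDerivAt.differentiableAt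
  have hφ : AnalyticAt ℝ (fun z => p z / deriv W z) z₀ := by
    simpa using analyticAt_conj hanti.restrictScalars
  refine (hW.restrictScalars.fun_mul hφ).congr ?_
  filter_upwards [hWp, hne'] with z hz hWz'
  rw [← mul_div_assoc, div_eq_iff hWz', hz, mul_comm]

section Intertwining

variable {a s P : ℂ → ℂ} (ha : AnalyticAt ℂ a z₀) (hP : AnalyticAt ℂ P (s z₀))
  (hs : ∀ᶠ z in 𝓝 z₀, HasWirtingerDerivAt s (p z) (q z) z)
  (hasP : ∀ᶠ z in 𝓝 z₀, a z * p z = P (s z))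

include ha hP hs hasP

theorem analyticAt_of_intertwining_of_ne_zero (ha₀ : a z₀ ≠ 0) (hP₀ : P (s z₀) ≠ 0) :
    AnalyticAt ℝ s z₀ := by
  have hcont : ContinuousAt s z₀ := hs.self_of_nhds.differentiableAt.continuousAt
  obtain ⟨Q, -, hQ⟩ := exists_eventually_hasDerivAt_of_analyticAt (hP.inv hP₀) 0
  obtain ⟨W, -, hW⟩ := exists_eventually_hasDerivAt_of_analyticAt (ha.inv ha₀) 0
  have hanti : AnalyticAt ℝ (fun z => Q (s z) - W z) z₀ := by
    refine analyticAt_of_antiholomorphic (q := fun z => (P (s z))⁻¹ * q z) ?_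
    filter_upwards [hcont.eventually hQ, hW, hs, hasP, ha.continuousAt.eventually_ne ha₀,
      hcont.eventually (hP.continuousAt.eventually_ne hP₀)] with z hQz hWz hsz hz haz hPz
    refine ((hsz.hasDerivAt_comp hQz).sub (.of_hasDerivAt hWz)).congr_deriv ?_ (sub_zero _)
    simp only [Pi.inv_apply]
    field_simp
    linear_combination hz
  have hQ' : deriv Q (s z₀) ≠ 0 := by simpa [hQ.self_of_nhds.deriv] using hP₀
  refine analyticAt_of_analyticAt_comp (analyticAt_of_eventually_hasDerivAt hQ) hQ' hcont ?_
  simpa using hanti.fun_add (analyticAt_of_eventually_hasDerivAt hW).restrictScalars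

theorem analyticAt_of_intertwining_of_simple_zero (hp : ContinuousAt p z₀) (ha₀ : a z₀ = 0)
    (hP₀ : P (s z₀) = 0) (ha' : deriv a z₀ ≠ 0) (haP' : deriv P (s z₀) = deriv a z₀) :
    AnalyticAt ℝ s z₀ := by
  have hcont : ContinuousAt s z₀ := hs.self_of_nhds.differentiableAt.continuousAt
  obtain ⟨Q, hQan, hQ', hPQ⟩ := exists_linearizing_coordinate hP hP₀ (haP' ▸ ha')
  obtain ⟨W, hWan, hW', haW⟩ := exists_linearizing_coordinate ha ha₀ ha'
  have hσ : ∀ᶠ z in 𝓝 z₀, HasWirtingerDerivAt (fun z => Q (s z)) (deriv Q (s z) * p z)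
      (deriv Q (s z) * q z) z := by
    filter_upwards [hcont.eventually hQan.eventually_analyticAt, hs] with z hQz hsz
    exact hsz.hasDerivAt_comp hQz.differentiableAt.hasDerivAt
  have hWσ : ∀ᶠ z in 𝓝 z₀, W z * (deriv Q (s z) * p z) = deriv W z * Q (s z) := by
    filter_upwards [hcont.eventually hPQ, haW, hasP] with z hPQz haWz hz
    refine mul_left_cancel₀ ha' ?_
    linear_combination -(deriv Q (s z) * p z) * haWz + deriv W z * deriv Q (s z) * hz +
      deriv W z * hPQz + deriv W z * Q (s z) * haP'
  have hσ_z : ContinuousAt (fun z => deriv Q (s z) * p z) z₀ :=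
    (hQan.deriv.continuousAt.comp hcont).mul hp
  exact analyticAt_of_analyticAt_comp hQan hQ' hcont
    (analyticAt_of_mul_wirtingerZ_eq hWan hW' hσ hσ_z hWσ)

end Intertwining

theorem exists_analyticAt_mul_eq_sub {P : ℂ → ℂ} (hP : AnalyticAt ℂ P z₀)
    (hne : P z₀ ≠ 0 ∨ deriv P z₀ ≠ 0) :
    ∃ B : ℂ → ℂ, AnalyticAt ℂ B z₀ ∧ ∀ᶠ z in 𝓝 z₀, P z * B z = z - z₀ := by
  by_cases hP₀ : P z₀ = 0
  · have hslope : dslope P z₀ z₀ ≠ 0 := by simpa [dslope_same, hP₀] using hne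
    refine ⟨_, (analyticAt_dslope hP).inv hslope, ?_⟩
    filter_upwards [(analyticAt_dslope hP).continuousAt.eventually_ne hslope] with z hz
    have hPz : (z - z₀) * dslope P z₀ z = P z := by simpa [hP₀] using sub_smul_dslope P z₀ z
    rw [← hPz, Pi.inv_apply, mul_assoc, mul_inv_cancel₀ hz, mul_one]
  · refine ⟨fun z => (z - z₀) / P z, by fun_prop (disch := assumption), ?_⟩
    filter_upwards [hP.continuousAt.eventually_ne hP₀] with z hz
    exact mul_div_cancel₀ _ hz

/- If `ψ' = B` with `P B = w - s z₀`, then `ψ ∘ s` has mixed derivative `h (P B)' ∘ s = h`. -/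
theorem analyticAt_of_moment_equations {h r s P : ℂ → ℂ} (hf : ContDiffAt ℝ 2 f z₀)
    (hfh : ∀ᶠ z in 𝓝 z₀, wirtingerZbar (wirtingerZ f) z = h z) (hsan : AnalyticAt ℝ s z₀)
    (hP : AnalyticAt ℂ P (s z₀)) (hne : P (s z₀) ≠ 0 ∨ deriv P (s z₀) ≠ 0)
    (hs : ∀ᶠ z in 𝓝 z₀, HasWirtingerDerivAt s (p z) (q z) z)
    (hp : ∀ᶠ z in 𝓝 z₀, HasWirtingerDerivAt p (r z) (h z * deriv P (s z)) z)
    (hpq : ∀ᶠ z in 𝓝 z₀, p z * q z = h z * P (s z)) : AnalyticAt ℝ f z₀ := by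
  obtain ⟨B, hB, hPB⟩ := exists_analyticAt_mul_eq_sub hP hne
  obtain ⟨ψ, -, hψ⟩ := exists_eventually_hasDerivAt_of_analyticAt hB 0
  have hcont := hsan.continuousAt
  have hPB' : ∀ᶠ w in 𝓝 (s z₀), deriv P w * B w + P w * deriv B w = 1 := by
    filter_upwards [hPB.eventually_nhds, hP.eventually_analyticAt, hB.eventually_analyticAt]
      with w hw hPw hBw
    have hmul := hPw.differentiableAt.hasDerivAt.mul hBw.differentiableAt.hasDerivAt
    exact (hmul.congr_of_eventuallyEq (hw.mono fun _ h => h.symm)).unique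
      ((hasDerivAt_id w).sub_const (s z₀))
  refine analyticAt_of_mixed_wirtinger_eq (g := fun z => ψ (s z)) (p := fun z => B (s z) * p z)
    (q := fun z => B (s z) * q z) (r := fun z => deriv B (s z) * p z * p z + B (s z) * r z) hf
    ((analyticAt_of_eventually_hasDerivAt hψ).restrictScalars.comp_of_eq hsan rfl) ?_ ?_
  · filter_upwards [hcont.eventually hψ, hs] with z hψz hsz
    exact hsz.hasDerivAt_comp hψz
  · filter_upwards [hcont.eventually hB.eventually_analyticAt, hcont.eventually hPB', hs, hp, hpq,
      hfh] with z hBz hPBz hsz hpz hpqz hfz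
    refine ((hsz.hasDerivAt_comp hBz.differentiableAt.hasDerivAt).mul hpz).congr_deriv rfl ?_
    rw [hfz]
    linear_combination deriv B (s z) * hpqz + h z * hPBz

theorem eventually_eq_zero_of_norm_fderiv_le {E F : Type*} [NormedAddCommGroup E]
    [NormedSpace ℝ E] [NormedAddCommGroup F] [NormedSpace ℝ F] {f : E → F} {f' : E → E →L[ℝ] F}
    {x₀ : E} {K : ℝ} (hf : ∀ᶠ x in 𝓝 x₀, HasFDerivAt f (f' x) x) (hf₀ : f x₀ = 0)
    (hbound : ∀ᶠ x in 𝓝 x₀, ‖f' x‖ ≤ K * ‖f x‖) : ∀ᶠ x in 𝓝 x₀, f x = 0 := by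
  obtain ⟨r, hr, hball⟩ := Metric.eventually_nhds_iff_ball.1 (hf.and hbound)
  filter_upwards [Metric.ball_mem_nhds x₀ hr] with x hx
  set γ : ℝ → E := fun t => AffineMap.lineMap x₀ x t
  have hmem {t : ℝ} (ht : t ∈ Set.Icc (0 : ℝ) 1) : γ t ∈ Metric.ball x₀ r :=
    (convex_ball x₀ r).segment_subset (Metric.mem_ball_self hr) hx
      (segment_eq_image_lineMap ℝ x₀ x ▸ Set.mem_image_of_mem _ ht)
  have hderiv {t : ℝ} (ht : t ∈ Set.Icc (0 : ℝ) 1) :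
      HasDerivAt (fun t => f (γ t)) (f' (γ t) (x - x₀)) t :=
    (hball _ (hmem ht)).1.comp_hasDerivAt t AffineMap.hasDerivAt_lineMap
  have hzero := eq_zero_of_abs_deriv_le_mul_abs_self_of_eq_zero_right (K := ‖x - x₀‖ * K)
    (fun t ht => (hderiv ht).continuousAt.continuousWithinAt)
    (fun t ht => (hderiv (Set.Ico_subset_Icc_self ht)).hasDerivWithinAt)
    (by simpa [γ] using hf₀)
    (fun t ht => by
      grw [ContinuousLinearMap.le_opNorm, (hball _ (hmem (Set.Ico_subset_Icc_self ht))).2]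
      exact (by ring : K * _ * _ = _).le) 1 (Set.right_mem_Icc.2 zero_le_one)
  simpa [γ] using hzero

theorem norm_wirtinger_combination_le (a b : ℂ) :
    ‖a • ContinuousLinearMap.id ℝ ℂ + b • (conjCLE : ℂ →L[ℝ] ℂ)‖ ≤ ‖a‖ + ‖b‖ := by
  refine ContinuousLinearMap.opNorm_le_bound _ (by positivity) fun w => ?_
  calc ‖a * w + b * conj w‖ ≤ ‖a * w‖ + ‖b * conj w‖ := norm_add_le _ _
    _ = (‖a‖ + ‖b‖) * ‖w‖ := by rw [norm_mul, norm_mul, norm_conj, add_mul]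

theorem exists_eq_sub_sq_mul_of_double_zero {P : ℂ → ℂ} (hP : AnalyticAt ℂ P z₀) (hP₀ : P z₀ = 0)
    (hP' : deriv P z₀ = 0) :
    ∃ c : ℂ → ℂ, AnalyticAt ℂ c z₀ ∧ ∀ z, P z = (z - z₀) ^ 2 * c z := by
  refine ⟨_, analyticAt_dslope (analyticAt_dslope hP), fun z => ?_⟩
  have hslope := sub_smul_dslope (dslope P z₀) z₀ z
  rw [dslope_same, hP', sub_zero, smul_eq_mul] at hslope
  have hPz : (z - z₀) * dslope P z₀ z = P z := by simpa [hP₀] using sub_smul_dslope P z₀ z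
  rw [← hPz, ← hslope]
  ring

/- Since `P` has a double zero, `|s_z|² = |h P(s)|` is at most a multiple of `|s - s z₀|²`, and
Grönwall's inequality applies. -/
theorem eventually_eq_const_of_double_zero {h s P : ℂ → ℂ}
    (hreal : ∀ᶠ z in 𝓝 z₀, conj (s z) = s z) (hh : ContinuousAt h z₀)
    (hs : ∀ᶠ z in 𝓝 z₀, HasWirtingerDerivAt s (p z) (q z) z)
    (hpq : ∀ᶠ z in 𝓝 z₀, p z * q z = h z * P (s z)) (hP : AnalyticAt ℂ P (s z₀))
    (hP₀ : P (s z₀) = 0) (hP' : deriv P (s z₀) = 0) : ∀ᶠ z in 𝓝 z₀, s z = s z₀ := by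
  have hcont : ContinuousAt s z₀ := hs.self_of_nhds.differentiableAt.continuousAt
  obtain ⟨c, hcan, hc⟩ := exists_eq_sub_sq_mul_of_double_zero hP hP₀ hP'
  obtain ⟨M, hM⟩ : ∃ M : ℝ, ∀ᶠ z in 𝓝 z₀, ‖h z * c (s z)‖ < M :=
    ⟨_, (hh.mul (hcan.continuousAt.comp hcont)).norm.eventually_lt_const (lt_add_one _)⟩
  have hbound : ∀ᶠ z in 𝓝 z₀, ‖p z • ContinuousLinearMap.id ℝ ℂ +
      q z • (conjCLE : ℂ →L[ℝ] ℂ)‖ ≤ 2 * √M * ‖s z - s z₀‖ := by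
    filter_upwards [hreal.eventually_nhds, hs, hpq, hM] with z hz hsz hpqz hMz
    have hq : ‖q z‖ = ‖p z‖ := by rw [hsz.eq_conj_of_conj_eq hz, norm_conj]
    have hsq : ‖p z‖ ^ 2 ≤ (√M * ‖s z - s z₀‖) ^ 2 := by
      rw [mul_pow, Real.sq_sqrt ((norm_nonneg _).trans hMz.le)]
      calc ‖p z‖ ^ 2 = ‖p z * q z‖ := by rw [norm_mul, hq, sq]
        _ = ‖h z * c (s z)‖ * ‖s z - s z₀‖ ^ 2 := by
          rw [hpqz, hc, ← norm_pow, ← norm_mul]; congr 1; ring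
        _ ≤ M * ‖s z - s z₀‖ ^ 2 := by gcongr
    have hp : ‖p z‖ ≤ √M * ‖s z - s z₀‖ := le_of_sq_le_sq hsq (by positivity)
    linarith [norm_wirtinger_combination_le (p z) (q z)]
  have hdiff : ∀ᶠ z in 𝓝 z₀, s z - s z₀ = 0 :=
    eventually_eq_zero_of_norm_fderiv_le
      (hs.mono fun _ hz => HasFDerivAt.sub_const (s z₀) hz) (sub_self _) hbound
  exact hdiff.mono fun _ hz => sub_eq_zero.1 hz

section LinearODE

variable {E : Type*} [NormedAddCommGroup E] [NormedSpace ℂ E]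
  {A : ℂ → E →L[ℂ] E} {z₀ : ℂ} {r M : ℝ}

theorem norm_picard_sequence_le {u : ℕ → ℂ → E} {y₀ : E} (hu_zero : u 0 = fun _ => y₀)
    (hu₀ : ∀ n, u (n + 1) z₀ = 0)
    (hu : ∀ n, ∀ z ∈ Metric.ball z₀ r, HasDerivAt (u (n + 1)) (A z (u n z)) z)
    (hM : ∀ z ∈ Metric.ball z₀ r, ‖A z‖ ≤ M) (n : ℕ) {z : ℂ} (hz : z ∈ Metric.ball z₀ r) :
    ‖u n z‖ ≤ ‖y₀‖ * (M * r) ^ n := by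
  have hr : 0 < r := Metric.pos_of_mem_ball hz
  have hM₀ : 0 ≤ M := (norm_nonneg _).trans (hM z hz)
  induction n generalizing z with
  | zero => simp [hu_zero]
  | succ n ih =>
    have hderiv : ∀ w ∈ Metric.ball z₀ r, ‖A w (u n w)‖ ≤ M * (‖y₀‖ * (M * r) ^ n) := by
      intro w hw
      grw [ContinuousLinearMap.le_opNorm, hM w hw, ih hw]
    have hmvt := (convex_ball z₀ r).norm_image_sub_le_of_norm_hasDerivWithin_le
      (fun w hw => (hu n w hw).hasDerivWithinAt) hderiv (Metric.mem_ball_self hr) hz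
    rw [hu₀, sub_zero] at hmvt
    calc ‖u (n + 1) z‖ ≤ M * (‖y₀‖ * (M * r) ^ n) * ‖z - z₀‖ := hmvt
      _ ≤ M * (‖y₀‖ * (M * r) ^ n) * r := by gcongr; exact (mem_ball_iff_norm.1 hz).le
      _ = ‖y₀‖ * (M * r) ^ (n + 1) := by ring

variable [CompleteSpace E]

theorem exists_picard_sequence (hA : DifferentiableOn ℂ A (Metric.ball z₀ r)) (y₀ : E) :
    ∃ u : ℕ → ℂ → E, u 0 = (fun _ => y₀) ∧ (∀ n, u (n + 1) z₀ = 0) ∧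
      ∀ n, ∀ z ∈ Metric.ball z₀ r, HasDerivAt (u (n + 1)) (A z (u n z)) z := by
  have hstep (u : {u : ℂ → E // DifferentiableOn ℂ u (Metric.ball z₀ r)}) :
      ∃ v : {v : ℂ → E // DifferentiableOn ℂ v (Metric.ball z₀ r)},
        v.1 z₀ = 0 ∧ ∀ z ∈ Metric.ball z₀ r, HasDerivAt v.1 (A z (u.1 z)) z := by
    obtain ⟨v, hv₀, hv⟩ := (hA.clm_apply u.2).isExactOn_ball.with_val_at z₀ 0
    exact ⟨⟨v, fun z hz => (hv z hz).differentiableAt.differentiableWithinAt⟩, hv₀, hv⟩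
  choose T hT₀ hT using hstep
  refine ⟨fun n => (T^[n] ⟨fun _ => y₀, differentiableOn_const y₀⟩).1, rfl,
    fun n => ?_, fun n => ?_⟩
  · simp only [Function.iterate_succ_apply', hT₀]
  · simpa only [Function.iterate_succ_apply'] using hT _

theorem exists_hasDerivAt_clm_apply_ball (hA : DifferentiableOn ℂ A (Metric.ball z₀ r))
    (hr : 0 < r) (hM : ∀ z ∈ Metric.ball z₀ r, ‖A z‖ ≤ M) (hMr : M * r < 1) (y₀ : E) :
    ∃ y : ℂ → E, y z₀ = y₀ ∧ ∀ z ∈ Metric.ball z₀ r, HasDerivAt y (A z (y z)) z := by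
  have hM₀ : 0 ≤ M := (norm_nonneg _).trans (hM z₀ (Metric.mem_ball_self hr))
  obtain ⟨u, hu_zero, hu₀, hu⟩ := exists_picard_sequence hA y₀
  have hbound := norm_picard_sequence_le hu_zero hu₀ hu hM
  have hsum : Summable fun n => ‖y₀‖ * (M * r) ^ n :=
    (summable_geometric_of_lt_one (by positivity) hMr).mul_left _
  have hsumu {z : ℂ} (hz : z ∈ Metric.ball z₀ r) : Summable fun n => u n z :=
    hsum.of_norm_bounded fun n => hbound n hz
  refine ⟨fun z => y₀ + ∑' n, u (n + 1) z, by simp [hu₀], fun z hz => ?_⟩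
  have hderiv := hasDerivAt_tsum_of_isPreconnected (g := fun n => u (n + 1))
    (g' := fun n z => A z (u n z)) (hsum.mul_left M) Metric.isOpen_ball
    (convex_ball z₀ r).isPreconnected hu
    (fun n w hw => by grw [ContinuousLinearMap.le_opNorm, hM w hw, hbound n hw])
    (Metric.mem_ball_self hr) (by simpa only [hu₀] using summable_zero) hz
  refine (hderiv.const_add y₀).congr_deriv ?_
  rw [← (A z).map_tsum (hsumu hz), (hsumu hz).tsum_eq_zero_add, hu_zero]

theorem exists_eventually_hasDerivAt_clm_apply (hA : AnalyticAt ℂ A z₀) (y₀ : E) :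
    ∃ y : ℂ → E, y z₀ = y₀ ∧ ∀ᶠ z in 𝓝 z₀, HasDerivAt y (A z (y z)) z := by
  obtain ⟨ρ, hρ, hball⟩ := Metric.eventually_nhds_iff_ball.1 <| hA.eventually_analyticAt.and
    (hA.continuousAt.norm.eventually_lt_const (lt_add_one ‖A z₀‖))
  set M := ‖A z₀‖ + 1
  have hM : 0 < M := by positivity
  obtain ⟨r, hr, hrρ⟩ := exists_between (lt_min hρ (inv_pos.2 hM))
  have hsub : Metric.ball z₀ r ⊆ Metric.ball z₀ ρ :=
    Metric.ball_subset_ball (hrρ.le.trans (min_le_left _ _))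
  have hMr : M * r < 1 := by
    rw [mul_comm, ← lt_div_iff₀ hM, one_div]
    exact hrρ.trans_le (min_le_right _ _)
  obtain ⟨y, hy₀, hy⟩ := exists_hasDerivAt_clm_apply_ball
    (fun z hz => (hball z (hsub hz)).1.differentiableAt.differentiableWithinAt) hr
    (fun z hz => (hball z (hsub hz)).2.le) hMr y₀
  exact ⟨y, hy₀, eventually_of_mem (Metric.ball_mem_nhds z₀ hr) hy⟩

end LinearODE

theorem exists_eventually_solution_second_order {τ : ℂ → ℂ} (hτ : AnalyticAt ℂ τ z₀) (α β : ℂ) :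
    ∃ u u' : ℂ → ℂ, u z₀ = α ∧ u' z₀ = β ∧
      ∀ᶠ z in 𝓝 z₀, HasDerivAt u (u' z) z ∧ HasDerivAt u' (τ z * u z) z := by
  let upper : ℂ × ℂ →L[ℂ] ℂ × ℂ := (ContinuousLinearMap.snd ℂ ℂ ℂ).prod 0
  let lower : ℂ × ℂ →L[ℂ] ℂ × ℂ := (0 : ℂ × ℂ →L[ℂ] ℂ).prod (ContinuousLinearMap.fst ℂ ℂ ℂ)
  obtain ⟨y, hy₀, hy⟩ := exists_eventually_hasDerivAt_clm_apply
    (A := fun z => upper + τ z • lower) (by fun_prop) (α, β)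
  refine ⟨fun z => (y z).1, fun z => (y z).2, by simp [hy₀], by simp [hy₀], ?_⟩
  filter_upwards [hy] with z hz
  exact ⟨(hasFDerivAt_fst.comp_hasDerivAt z hz).congr_deriv (by simp [upper, lower]),
    (hasFDerivAt_snd.comp_hasDerivAt z hz).congr_deriv (by simp [upper, lower])⟩

/- Variation of constants: with `g₁, g₂` a fundamental system of `u'' = τ u` of Wronskian `1`,
the coefficients of `f` in this system are antiholomorphic. -/
theorem analyticAt_of_second_order_linear {τ : ℂ → ℂ} (hτ : AnalyticAt ℂ τ z₀)
    (hf : ∀ᶠ z in 𝓝 z₀, HasWirtingerDerivAt f (p z) (q z) z) {r : ℂ → ℂ}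
    (hp : ∀ᶠ z in 𝓝 z₀, HasWirtingerDerivAt p (τ z * f z) (r z) z) : AnalyticAt ℝ f z₀ := by
  have hcoeff {g g' : ℂ → ℂ}
      (hg : ∀ᶠ z in 𝓝 z₀, HasDerivAt g (g' z) z ∧ HasDerivAt g' (τ z * g z) z) :
      AnalyticAt ℝ (fun z => f z * g' z - p z * g z) z₀ := by
    refine analyticAt_of_antiholomorphic (q := fun z => q z * g' z - r z * g z) ?_
    filter_upwards [hf, hp, hg] with z hfz hpz ⟨hgz, hgz'⟩
    exact ((hfz.mul (.of_hasDerivAt hgz')).sub (hpz.mul (.of_hasDerivAt hgz))).congr_deriv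
      (by ring) (by ring)
  obtain ⟨g₁, g₁', h₁, h₁', hg₁⟩ := exists_eventually_solution_second_order hτ 1 0
  obtain ⟨g₂, g₂', h₂, h₂', hg₂⟩ := exists_eventually_solution_second_order hτ 0 1
  have hwronskian : ∀ᶠ z in 𝓝 z₀, g₁ z * g₂' z - g₂ z * g₁' z = 1 := by
    have hconst := eventually_eq_const_of_hasWirtingerDerivAt_zero
      (f := fun z => g₁ z * g₂' z - g₂ z * g₁' z) (z₀ := z₀) <| by
        filter_upwards [hg₁, hg₂] with z ⟨hz₁, hz₁'⟩ ⟨hz₂, hz₂'⟩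
        exact .of_hasDerivAt (((hz₁.fun_mul hz₂').fun_sub (hz₂.fun_mul hz₁')).congr_deriv (by ring))
    simpa [h₁, h₁', h₂, h₂'] using hconst
  have han {g g' : ℂ → ℂ}
      (hg : ∀ᶠ z in 𝓝 z₀, HasDerivAt g (g' z) z ∧ HasDerivAt g' (τ z * g z) z) :
      AnalyticAt ℝ g z₀ :=
    (analyticAt_of_eventually_hasDerivAt (hg.mono fun _ hz => hz.1)).restrictScalars
  refine (((han hg₁).fun_mul (hcoeff hg₂)).fun_sub ((han hg₂).fun_mul (hcoeff hg₁))).congr ?_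
  filter_upwards [hwronskian] with z hz
  linear_combination f z * hz

end WirtingerCalculus

section ConformalMetric

open Filter Topology ComplexConjugate ContDiff

/-- `h |dz|²` is a smooth conformal metric on the open set `U`, of either sign; the conformal
factor is a complex-valued function whose values are real. -/
structure IsConformalFactorOn (h : ℂ → ℂ) (U : Set ℂ) : Prop where
  isOpen : IsOpen U
  contDiffAt : ∀ z ∈ U, ContDiffAt ℝ ∞ h z
  conj_eq : ∀ z ∈ U, conj (h z) = h z
  ne_zero : ∀ z ∈ U, h z ≠ 0

/-- The derivative `(log h)_z̄ = h_z̄ / h`; this is `μ` for `h = F_{zz̄}`. -/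
noncomputable def logDerivZbar (h : ℂ → ℂ) (z : ℂ) : ℂ := wirtingerZbar h z / h z

/-- The curvature `(log h)_{zz̄} / h` of the metric `h |dz|²`, normalised so that it is a constant
negative multiple of the Gaussian curvature. -/
noncomputable def curvature (h : ℂ → ℂ) (z : ℂ) : ℂ := wirtingerZ (logDerivZbar h) z / h z

/-- The coefficient of the `(1, 0)`-gradient of the curvature with respect to `h |dz|²`. It is
holomorphic exactly when the metric is extremal in the sense of Calabi. -/
noncomputable def curvatureGradient (h : ℂ → ℂ) (z : ℂ) : ℂ := wirtingerZbar (curvature h) z / h z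

namespace IsConformalFactorOn

variable {f h : ℂ → ℂ} {U : Set ℂ} {z z₀ : ℂ} (hh : IsConformalFactorOn h U)

include hh

theorem eventually_of_forall_mem {Q : ℂ → Prop} (hz : z ∈ U) (hQ : ∀ w ∈ U, Q w) :
    ∀ᶠ w in 𝓝 z, Q w :=
  eventually_of_mem (hh.isOpen.mem_nhds hz) hQ

theorem contDiffAt_logDerivZbar (hz : z ∈ U) : ContDiffAt ℝ ∞ (logDerivZbar h) z :=
  (contDiffAt_wirtingerZbar (hh.contDiffAt z hz) le_rfl).mul
    ((hh.contDiffAt z hz).inv (hh.ne_zero z hz))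

theorem contDiffAt_curvature (hz : z ∈ U) : ContDiffAt ℝ ∞ (curvature h) z :=
  (contDiffAt_wirtingerZ (hh.contDiffAt_logDerivZbar hz) le_rfl).mul
    ((hh.contDiffAt z hz).inv (hh.ne_zero z hz))

theorem hasWirtingerDerivAt (hz : z ∈ U) :
    HasWirtingerDerivAt h (h z * conj (logDerivZbar h z)) (h z * logDerivZbar h z) z := by
  have hd := HasWirtingerDerivAt.of_differentiableAt
    ((hh.contDiffAt z hz).differentiableAt (by simp))
  have hZbar : wirtingerZbar h z = h z * logDerivZbar h z :=
    (mul_div_cancel₀ _ (hh.ne_zero z hz)).symm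
  have hconj := hd.eq_conj_of_conj_eq (hh.eventually_of_forall_mem hz hh.conj_eq)
  refine hd.congr_deriv ?_ hZbar
  rw [← conj_conj (wirtingerZ h z), ← hconj, hZbar, map_mul, hh.conj_eq z hz]

theorem hasWirtingerDerivAt_logDerivZbar (hz : z ∈ U) :
    HasWirtingerDerivAt (logDerivZbar h) (h z * curvature h z)
      (wirtingerZbar (logDerivZbar h) z) z :=
  (HasWirtingerDerivAt.of_differentiableAt
    ((hh.contDiffAt_logDerivZbar hz).differentiableAt (by simp))).congr_deriv
    (mul_div_cancel₀ _ (hh.ne_zero z hz)).symm rfl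

theorem conj_curvature (hz : z ∈ U) : conj (curvature h z) = curvature h z := by
  have hhz := hh.hasWirtingerDerivAt hz
  have hμ := hh.hasWirtingerDerivAt_logDerivZbar hz
  have hmixed := mixed_wirtinger_eq (contDiffAt_infty.1 (hh.contDiffAt z hz) 2)
    (hh.eventually_of_forall_mem hz fun _ => hh.hasWirtingerDerivAt)
    (hhz.mul hμ.star) (hhz.mul hμ)
  rw [map_mul, hh.conj_eq z hz] at hmixed
  refine mul_left_cancel₀ (pow_ne_zero 2 (hh.ne_zero z hz)) ?_
  linear_combination hmixed

theorem hasWirtingerDerivAt_curvature (hz : z ∈ U) :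
    HasWirtingerDerivAt (curvature h) (h z * conj (curvatureGradient h z))
      (h z * curvatureGradient h z) z := by
  have hd := HasWirtingerDerivAt.of_differentiableAt
    ((hh.contDiffAt_curvature hz).differentiableAt (by simp))
  have hZbar : wirtingerZbar (curvature h) z = h z * curvatureGradient h z :=
    (mul_div_cancel₀ _ (hh.ne_zero z hz)).symm
  have hconj := hd.eq_conj_of_conj_eq (hh.eventually_of_forall_mem hz fun _ => hh.conj_curvature)
  refine hd.congr_deriv ?_ hZbar
  rw [← conj_conj (wirtingerZ (curvature h) z), ← hconj, hZbar, map_mul, hh.conj_eq z hz]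

theorem curvatureGradient_eq (hz : z ∈ U) :
    curvatureGradient h z = (wirtingerZbar (wirtingerZ (logDerivZbar h)) z -
      wirtingerZ (logDerivZbar h) z * logDerivZbar h z) / (h z * h z) := by
  have hne := hh.ne_zero z hz
  have hρ := HasWirtingerDerivAt.of_differentiableAt ((contDiffAt_wirtingerZ (m := ∞)
    (hh.contDiffAt_logDerivZbar hz) le_rfl).differentiableAt (by simp))
  have hs : wirtingerZbar (curvature h) z = _ :=
    (hρ.div (hh.hasWirtingerDerivAt hz) hne).wirtingerZbar_eq
  rw [curvatureGradient, hs]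
  field_simp

theorem differentiableAt_curvatureGradient_of_loboda (hz : z ∈ U)
    (hloboda : wirtingerZbar (wirtingerZbar (wirtingerZ (logDerivZbar h))) z
      - 3 * wirtingerZbar (wirtingerZ (logDerivZbar h)) z * logDerivZbar h z
      + 2 * wirtingerZ (logDerivZbar h) z * logDerivZbar h z ^ 2
      - wirtingerZ (logDerivZbar h) z * wirtingerZbar (logDerivZbar h) z = 0) :
    DifferentiableAt ℂ (curvatureGradient h) z := by
  have hne := hh.ne_zero z hz
  have hμ := hh.contDiffAt_logDerivZbar hz
  have hρ : ContDiffAt ℝ ∞ (wirtingerZ (logDerivZbar h)) z := contDiffAt_wirtingerZ hμ le_rfl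
  have hρbar : ContDiffAt ℝ ∞ (wirtingerZbar (wirtingerZ (logDerivZbar h))) z :=
    contDiffAt_wirtingerZbar hρ le_rfl
  have hd {g : ℂ → ℂ} (hg : ContDiffAt ℝ ∞ g z) :=
    HasWirtingerDerivAt.of_differentiableAt (hg.differentiableAt (by simp))
  have hhz := hh.hasWirtingerDerivAt hz
  have ha := (((hd hρbar).sub ((hd hρ).mul (hd hμ))).div (hhz.mul hhz)
    (mul_ne_zero hne hne)).congr_of_eventuallyEq
      (hh.eventually_of_forall_mem hz fun _ => hh.curvatureGradient_eq)
  refine (ha.congr_deriv rfl ?_).hasDerivAt.differentiableAt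
  field_simp
  linear_combination hloboda

theorem conj_curvatureGradient_mul_add_deriv (hz : z ∈ U)
    (ha : DifferentiableAt ℂ (curvatureGradient h) z) :
    conj (curvatureGradient h z * conj (logDerivZbar h z) + deriv (curvatureGradient h) z) =
      curvatureGradient h z * conj (logDerivZbar h z) + deriv (curvatureGradient h) z := by
  have hhz := hh.hasWirtingerDerivAt hz
  have haz := HasWirtingerDerivAt.of_hasDerivAt ha.hasDerivAt
  have hmixed := mixed_wirtinger_eq (contDiffAt_infty.1 (hh.contDiffAt_curvature hz) 2)
    (hh.eventually_of_forall_mem hz fun _ => hh.hasWirtingerDerivAt_curvature)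
    (hhz.mul haz.star) (hhz.mul haz)
  refine mul_left_cancel₀ (hh.ne_zero z hz) ?_
  rw [map_add, map_mul, conj_conj]
  linear_combination hmixed

theorem analyticAt_curvatureGradient (hext : ∀ z ∈ U, DifferentiableAt ℂ (curvatureGradient h) z)
    (hz₀ : z₀ ∈ U) : AnalyticAt ℂ (curvatureGradient h) z₀ :=
  analyticAt_iff_eventually_differentiableAt.2 (hh.eventually_of_forall_mem hz₀ hext)

theorem exists_curvatureGradient_mul_add_deriv_eq
    (hext : ∀ z ∈ U, DifferentiableAt ℂ (curvatureGradient h) z) (hz₀ : z₀ ∈ U) :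
    ∃ c : ℂ, conj c = c ∧ ∀ᶠ z in 𝓝 z₀,
      curvatureGradient h z * conj (logDerivZbar h z) + deriv (curvatureGradient h) z =
        curvature h z ^ 2 / 2 + c := by
  set a := curvatureGradient h
  set μ := logDerivZbar h
  set s := curvature h
  have hreal : ∀ᶠ z in 𝓝 z₀, conj (a z * conj (μ z) + deriv a z - s z ^ 2 / 2) =
      a z * conj (μ z) + deriv a z - s z ^ 2 / 2 :=
    hh.eventually_of_forall_mem hz₀ fun z hz => by
      rw [map_sub, hh.conj_curvatureGradient_mul_add_deriv hz (hext z hz), map_div₀, map_pow,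
        hh.conj_curvature hz, conj_ofNat]
  have hhol : ∀ᶠ z in 𝓝 z₀, HasWirtingerDerivAt
      (fun z => a z * conj (μ z) + deriv a z - s z ^ 2 / 2)
      (deriv a z * conj (μ z) + a z * conj (wirtingerZbar μ z) + deriv (deriv a) z
        - s z * (h z * conj (a z))) 0 z := by
    filter_upwards [hh.isOpen.mem_nhds hz₀,
      (hh.analyticAt_curvatureGradient hext hz₀).eventually_analyticAt] with z hz haz
    have hsq : HasDerivAt (fun w : ℂ => w ^ 2 / 2) (s z) (s z) := by
      simpa using (hasDerivAt_pow 2 (s z)).div_const 2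
    refine ((((HasWirtingerDerivAt.of_hasDerivAt haz.differentiableAt.hasDerivAt).mul
      (hh.hasWirtingerDerivAt_logDerivZbar hz).star).add
      (.of_hasDerivAt haz.deriv.differentiableAt.hasDerivAt)).sub
      ((hh.hasWirtingerDerivAt_curvature hz).hasDerivAt_comp hsq)).congr_deriv rfl ?_
    rw [map_mul, hh.conj_eq z hz, hh.conj_curvature hz]
    ring
  refine ⟨_, hreal.self_of_nhds, ?_⟩
  filter_upwards [eventually_eq_const_of_real_of_holomorphic hreal hhol] with z hz
  linear_combination hz

theorem exists_normSq_curvatureGradient_eq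
    (hext : ∀ z ∈ U, DifferentiableAt ℂ (curvatureGradient h) z) (hz₀ : z₀ ∈ U) {c : ℂ}
    (hc : conj c = c)
    (hlin : ∀ᶠ z in 𝓝 z₀, curvatureGradient h z * conj (logDerivZbar h z)
      + deriv (curvatureGradient h) z = curvature h z ^ 2 / 2 + c) :
    ∃ d : ℂ, ∀ᶠ z in 𝓝 z₀, h z * (curvatureGradient h z * conj (curvatureGradient h z)) =
      curvature h z ^ 3 / 6 + c * curvature h z + d := by
  set a := curvatureGradient h
  set μ := logDerivZbar h
  set s := curvature h
  have hreal : ∀ᶠ z in 𝓝 z₀, conj (h z * (a z * conj (a z)) - (s z ^ 3 / 6 + c * s z)) =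
      h z * (a z * conj (a z)) - (s z ^ 3 / 6 + c * s z) :=
    hh.eventually_of_forall_mem hz₀ fun z hz => by
      simp only [map_sub, map_add, map_mul, map_div₀, map_pow, conj_conj, conj_ofNat,
        hh.conj_eq z hz, hh.conj_curvature hz, hc, s, mul_comm (conj (a z))]
  have hhol : ∀ᶠ z in 𝓝 z₀, HasWirtingerDerivAt
      (fun z => h z * (a z * conj (a z)) - (s z ^ 3 / 6 + c * s z))
      (h z * conj (a z) * (a z * conj (μ z) + deriv a z - (s z ^ 2 / 2 + c))) 0 z := by
    filter_upwards [hh.isOpen.mem_nhds hz₀, hlin] with z hz hlinz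
    have haz := HasWirtingerDerivAt.of_hasDerivAt (hext z hz).hasDerivAt
    have hcubic : HasDerivAt (fun w => w ^ 3 / 6 + c * w) (s z ^ 2 / 2 + c) (s z) :=
      (((hasDerivAt_pow 3 (s z)).div_const 6).add ((hasDerivAt_id (s z)).const_mul c)).congr_deriv
        (by push_cast; ring)
    have hconj := hh.conj_curvatureGradient_mul_add_deriv hz (hext z hz)
    rw [map_add, map_mul, conj_conj] at hconj
    refine (((hh.hasWirtingerDerivAt hz).mul (haz.mul haz.star)).sub
      ((hh.hasWirtingerDerivAt_curvature hz).hasDerivAt_comp hcubic)).congr_deriv ?_ ?_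
    · rw [map_zero]
      ring
    · linear_combination h z * a z * (hconj + hlinz)
  refine ⟨h z₀ * (a z₀ * conj (a z₀)) - (s z₀ ^ 3 / 6 + c * s z₀), ?_⟩
  filter_upwards [eventually_eq_const_of_real_of_holomorphic hreal hhol] with z hz
  linear_combination hz

theorem exists_moment_profile
    (hext : ∀ z ∈ U, DifferentiableAt ℂ (curvatureGradient h) z) (hz₀ : z₀ ∈ U) :
    ∃ P : ℂ → ℂ, Differentiable ℂ P ∧
      (∀ᶠ z in 𝓝 z₀, h z * (curvatureGradient h z * conj (curvatureGradient h z)) =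
        P (curvature h z)) ∧
      ∀ᶠ z in 𝓝 z₀, curvatureGradient h z * conj (logDerivZbar h z)
        + deriv (curvatureGradient h) z = deriv P (curvature h z) := by
  obtain ⟨c, hc, hlin⟩ := hh.exists_curvatureGradient_mul_add_deriv_eq hext hz₀
  obtain ⟨d, hnormSq⟩ := hh.exists_normSq_curvatureGradient_eq hext hz₀ hc hlin
  have hP (w : ℂ) : HasDerivAt (fun w : ℂ => w ^ 3 / 6 + c * w + d) (w ^ 2 / 2 + c) w :=
    ((((hasDerivAt_pow 3 w).div_const 6).add ((hasDerivAt_id w).const_mul c)).add_const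
      d).congr_deriv (by push_cast; ring)
  refine ⟨_, fun w => (hP w).differentiableAt, hnormSq, hlin.mono fun z hz => ?_⟩
  rw [hz, (hP _).deriv]

theorem hasWirtingerDerivAt_log {c : ℂ} (hz : z ∈ U) (hslit : c * h z ∈ slitPlane) :
    HasWirtingerDerivAt (fun w => log (c * h w)) (conj (logDerivZbar h z))
      (logDerivZbar h z) z := by
  have hne := hh.ne_zero z hz
  have hc : c ≠ 0 := left_ne_zero_of_mul (slitPlane_ne_zero hslit)
  refine (((hh.hasWirtingerDerivAt hz).const_mul c).hasDerivAt_comp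
    (Complex.hasDerivAt_log hslit)).congr_deriv ?_ ?_ <;> field_simp

theorem eventually_inv_mul_mem_slitPlane (hz₀ : z₀ ∈ U) :
    ∀ᶠ z in 𝓝 z₀, (h z₀)⁻¹ * h z ∈ slitPlane := by
  refine (continuousAt_const.mul (hh.contDiffAt z₀ hz₀).continuousAt).eventually_mem
    (isOpen_slitPlane.mem_nhds ?_)
  simp [inv_mul_cancel₀ (hh.ne_zero z₀ hz₀)]

section ConstantCurvature

variable {k : ℂ} (hz₀ : z₀ ∈ U) (hk : ∀ᶠ z in 𝓝 z₀, curvature h z = k)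

include hz₀ hk

theorem eventually_hasWirtingerDerivAt_conj_logDerivZbar : ∀ᶠ z in 𝓝 z₀,
    HasWirtingerDerivAt (fun w => conj (logDerivZbar h w)) (conj (wirtingerZbar (logDerivZbar h) z))
      (k * h z) z := by
  filter_upwards [hh.isOpen.mem_nhds hz₀, hk] with z hz hkz
  refine (hh.hasWirtingerDerivAt_logDerivZbar hz).star.congr_deriv rfl ?_
  rw [map_mul, hh.conj_eq z hz, hh.conj_curvature hz, hkz, mul_comm]

/- This function is `-1/2` times the Schwarzian derivative of the developing map of the metric. -/
theorem analyticAt_schwarzian : AnalyticAt ℂ (fun z => conj (logDerivZbar h z) ^ 2 / 4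
    - conj (wirtingerZbar (logDerivZbar h) z) / 2) z₀ := by
  rw [analyticAt_iff_eventually_differentiableAt]
  have hν := hh.eventually_hasWirtingerDerivAt_conj_logDerivZbar hz₀ hk
  filter_upwards [hh.isOpen.mem_nhds hz₀, hν, hν.eventually_nhds] with z hz hνz hνnear
  have hμ := hh.contDiffAt_logDerivZbar hz
  have hμbar := HasWirtingerDerivAt.of_differentiableAt
    ((contDiffAt_wirtingerZbar (m := ∞) hμ le_rfl).differentiableAt (by simp))
  have hmixed := mixed_wirtinger_eq
    (contDiffAt_infty.1 ((conjCLE : ℂ →L[ℝ] ℂ).contDiff.contDiffAt.comp z hμ) 2) hνnear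
    hμbar.star ((hh.hasWirtingerDerivAt hz).const_mul k)
  have hsq : HasDerivAt (fun w : ℂ => w ^ 2 / 4) (conj (logDerivZbar h z) / 2)
      (conj (logDerivZbar h z)) :=
    ((hasDerivAt_pow 2 _).div_const 4).congr_deriv (by push_cast; ring)
  have hhalf : HasDerivAt (fun w : ℂ => w / 2) (1 / 2)
      (conj (wirtingerZbar (logDerivZbar h) z)) := (hasDerivAt_id _).div_const 2
  refine ((hνz.hasDerivAt_comp hsq).sub
    (hμbar.star.hasDerivAt_comp hhalf)).congr_deriv rfl ?_ |>.hasDerivAt.differentiableAt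
  linear_combination -(1 / 2 : ℂ) * hmixed

/- `v = h ^ (-1 / 2)` solves `v_zz = τ v` with `τ` holomorphic. -/
theorem analyticAt_log : AnalyticAt ℝ (fun z => log ((h z₀)⁻¹ * h z)) z₀ := by
  have hlog : ∀ᶠ z in 𝓝 z₀, HasWirtingerDerivAt (fun z => log ((h z₀)⁻¹ * h z))
      (conj (logDerivZbar h z)) (logDerivZbar h z) z := by
    filter_upwards [hh.isOpen.mem_nhds hz₀, hh.eventually_inv_mul_mem_slitPlane hz₀] with z hz
    exact hh.hasWirtingerDerivAt_log hz
  have hexp (w : ℂ) : HasDerivAt (fun w => exp (-w / 2)) (-(1 / 2) * exp (-w / 2)) w :=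
    ((hasDerivAt_neg w).div_const 2).cexp.congr_deriv (by ring)
  set v := fun z => exp (-log ((h z₀)⁻¹ * h z) / 2)
  have hv : ∀ᶠ z in 𝓝 z₀, HasWirtingerDerivAt v (-(1 / 2) * (v z * conj (logDerivZbar h z)))
      (-(1 / 2) * (v z * logDerivZbar h z)) z :=
    hlog.mono fun z hz => (hz.hasDerivAt_comp (hexp _)).congr_deriv (mul_assoc ..) (mul_assoc ..)
  have hvan : AnalyticAt ℝ v z₀ := by
    refine analyticAt_of_second_order_linear (hh.analyticAt_schwarzian hz₀ hk) hv (r := fun z =>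
      -(1 / 2) * (-(1 / 2) * (v z * logDerivZbar h z) * conj (logDerivZbar h z)
        + v z * (k * h z))) ?_
    filter_upwards [hv, hh.eventually_hasWirtingerDerivAt_conj_logDerivZbar hz₀ hk] with z hvz hνz
    exact ((hvz.mul hνz).const_mul (-(1 / 2))).congr_deriv (by ring) rfl
  exact analyticAt_of_analyticAt_comp (Q := fun w => exp (-w / 2)) (by fun_prop)
    (by rw [(hexp _).deriv]; exact mul_ne_zero (by norm_num) (exp_ne_zero _))
    hlog.self_of_nhds.differentiableAt.continuousAt hvan

theorem analyticAt_potential_of_curvature_const_ne_zero (hf : ContDiffAt ℝ 2 f z₀)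
    (hfh : ∀ᶠ z in 𝓝 z₀, wirtingerZbar (wirtingerZ f) z = h z) (hk₀ : k ≠ 0) :
    AnalyticAt ℝ f z₀ := by
  refine analyticAt_of_mixed_wirtinger_eq (g := fun z => k⁻¹ * log ((h z₀)⁻¹ * h z))
    (p := fun z => k⁻¹ * conj (logDerivZbar h z)) (q := fun z => k⁻¹ * logDerivZbar h z)
    (r := fun z => k⁻¹ * conj (wirtingerZbar (logDerivZbar h) z)) hf
    (analyticAt_const.fun_mul (hh.analyticAt_log hz₀ hk)) ?_ ?_
  · filter_upwards [hh.isOpen.mem_nhds hz₀, hh.eventually_inv_mul_mem_slitPlane hz₀] with z hz hslit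
    exact (hh.hasWirtingerDerivAt_log hz hslit).const_mul k⁻¹
  · filter_upwards [hh.eventually_hasWirtingerDerivAt_conj_logDerivZbar hz₀ hk, hfh] with z hνz hfhz
    refine (hνz.const_mul k⁻¹).congr_deriv rfl ?_
    rw [hfhz, inv_mul_cancel_left₀ hk₀]

end ConstantCurvature

theorem exists_eq_exp_mul_conj_of_curvature_eq_zero (hz₀ : z₀ ∈ U)
    (hk : ∀ᶠ z in 𝓝 z₀, curvature h z = 0) :
    ∃ E κ : ℂ → ℂ, AnalyticAt ℂ E z₀ ∧ AnalyticAt ℂ κ z₀ ∧ ∀ z, h z = exp (E z) * conj (κ z) := by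
  have hν := hh.eventually_hasWirtingerDerivAt_conj_logDerivZbar hz₀ hk
  have hνan : AnalyticAt ℂ (fun z => conj (logDerivZbar h z)) z₀ :=
    analyticAt_of_eventually_hasDerivAt (hν.mono fun z hz =>
      (hz.congr_deriv rfl (zero_mul _)).hasDerivAt)
  obtain ⟨E, -, hE⟩ := exists_eventually_hasDerivAt_of_analyticAt hνan 0
  refine ⟨E, fun z => conj (exp (-E z) * h z), analyticAt_of_eventually_hasDerivAt hE, ?_,
    fun z => ?_⟩
  · rw [analyticAt_iff_eventually_differentiableAt]
    filter_upwards [hh.isOpen.mem_nhds hz₀, hE] with z hz hEz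
    have hκ := ((HasWirtingerDerivAt.of_hasDerivAt hEz.fun_neg.cexp).mul
      (hh.hasWirtingerDerivAt hz)).star
    refine (hκ.congr_deriv rfl ?_).hasDerivAt.differentiableAt
    rw [← map_zero conj]
    congr 1
    ring
  · rw [conj_conj, ← mul_assoc, ← exp_add, add_neg_cancel, exp_zero, one_mul]

theorem analyticAt_potential_of_curvature_eq_zero (hz₀ : z₀ ∈ U)
    (hk : ∀ᶠ z in 𝓝 z₀, curvature h z = 0) (hf : ContDiffAt ℝ 2 f z₀)
    (hfh : ∀ᶠ z in 𝓝 z₀, wirtingerZbar (wirtingerZ f) z = h z) : AnalyticAt ℝ f z₀ := by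
  obtain ⟨E, κ, hE, hκ, hfactor⟩ := hh.exists_eq_exp_mul_conj_of_curvature_eq_zero hz₀ hk
  obtain ⟨X, -, hX⟩ := exists_eventually_hasDerivAt_of_analyticAt hE.cexp 0
  obtain ⟨K, -, hK⟩ := exists_eventually_hasDerivAt_of_analyticAt hκ 0
  refine analyticAt_of_mixed_wirtinger_eq (g := fun z => X z * conj (K z))
    (p := fun z => exp (E z) * conj (K z)) (q := fun z => X z * conj (κ z))
    (r := fun z => exp (E z) * deriv E z * conj (K z)) hf
    ((analyticAt_of_eventually_hasDerivAt hX).restrictScalars.fun_mul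
      (analyticAt_conj (analyticAt_of_eventually_hasDerivAt hK).restrictScalars)) ?_ ?_
  · filter_upwards [hX, hK] with z hXz hKz
    exact ((HasWirtingerDerivAt.of_hasDerivAt hXz).mul
      (HasWirtingerDerivAt.of_hasDerivAt hKz).star).congr_deriv (by simp) (by simp)
  · filter_upwards [hE.eventually_analyticAt, hK, hfh] with z hEz hKz hfhz
    exact ((HasWirtingerDerivAt.of_hasDerivAt hEz.differentiableAt.hasDerivAt.cexp).mul
      (HasWirtingerDerivAt.of_hasDerivAt hKz).star).congr_deriv (by simp)
      (by simp [hfhz, hfactor])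

theorem analyticAt_potential_of_curvature_const {k : ℂ} (hz₀ : z₀ ∈ U)
    (hk : ∀ᶠ z in 𝓝 z₀, curvature h z = k) (hf : ContDiffAt ℝ 2 f z₀)
    (hfh : ∀ᶠ z in 𝓝 z₀, wirtingerZbar (wirtingerZ f) z = h z) : AnalyticAt ℝ f z₀ := by
  rcases eq_or_ne k 0 with rfl | hk₀
  · exact hh.analyticAt_potential_of_curvature_eq_zero hz₀ hk hf hfh
  · exact hh.analyticAt_potential_of_curvature_const_ne_zero hz₀ hk hf hfh hk₀

theorem hasWirtingerDerivAt_mul_conj_curvatureGradient (hz : z ∈ U)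
    (ha : DifferentiableAt ℂ (curvatureGradient h) z) :
    HasWirtingerDerivAt (fun w => h w * conj (curvatureGradient h w))
      (h z * conj (logDerivZbar h z) * conj (curvatureGradient h z))
      (h z * (curvatureGradient h z * conj (logDerivZbar h z) + deriv (curvatureGradient h) z))
      z := by
  refine ((hh.hasWirtingerDerivAt hz).mul (HasWirtingerDerivAt.of_hasDerivAt
    ha.hasDerivAt).star).congr_deriv (by simp) ?_
  rw [← hh.conj_curvatureGradient_mul_add_deriv hz ha, map_add, map_mul, conj_conj]
  ring

theorem analyticAt_potential (hext : ∀ z ∈ U, DifferentiableAt ℂ (curvatureGradient h) z)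
    (hz₀ : z₀ ∈ U) (hf : ContDiffAt ℝ 2 f z₀)
    (hfh : ∀ᶠ z in 𝓝 z₀, wirtingerZbar (wirtingerZ f) z = h z) : AnalyticAt ℝ f z₀ := by
  obtain ⟨P, hP, hnormSq, hlin⟩ := hh.exists_moment_profile hext hz₀
  set a := curvatureGradient h
  set s := curvature h
  have hne := hh.ne_zero z₀ hz₀
  have ha := hh.analyticAt_curvatureGradient hext hz₀
  have hPan := hP.analyticAt (s z₀)
  have hs := hh.eventually_of_forall_mem hz₀ fun _ => hh.hasWirtingerDerivAt_curvature
  have hp := (hlin.and (hh.isOpen.mem_nhds hz₀)).mono fun z hz =>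
    (hh.hasWirtingerDerivAt_mul_conj_curvatureGradient hz.2 (hext z hz.2)).congr_deriv rfl
      (congrArg (h z * ·) hz.1)
  have hpq : ∀ᶠ z in 𝓝 z₀, h z * conj (a z) * (h z * a z) = h z * P (s z) :=
    hnormSq.mono fun z hz => by linear_combination h z * hz
  have hap : ∀ᶠ z in 𝓝 z₀, a z * (h z * conj (a z)) = P (s z) :=
    hnormSq.mono fun z hz => by linear_combination hz
  rcases ne_or_eq (a z₀) 0 with ha₀ | ha₀
  · have hP₀ : P (s z₀) ≠ 0 := by simp [← hap.self_of_nhds, ha₀, hne]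
    exact analyticAt_of_moment_equations hf hfh
      (analyticAt_of_intertwining_of_ne_zero ha hPan hs hap ha₀ hP₀) hPan (.inl hP₀) hs hp hpq
  have hP₀ : P (s z₀) = 0 := by simp [← hap.self_of_nhds, ha₀]
  rcases ne_or_eq (deriv P (s z₀)) 0 with hP' | hP'
  · have haP' : deriv P (s z₀) = deriv a z₀ := by simp [← hlin.self_of_nhds, ha₀]
    exact analyticAt_of_moment_equations hf hfh
      (analyticAt_of_intertwining_of_simple_zero ha hPan hs hap
        hp.self_of_nhds.differentiableAt.continuousAt ha₀ hP₀ (haP' ▸ hP') haP')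
      hPan (.inr hP') hs hp hpq
  · exact hh.analyticAt_potential_of_curvature_const hz₀
      (eventually_eq_const_of_double_zero
        (hh.eventually_of_forall_mem hz₀ fun _ => hh.conj_curvature)
        (hh.contDiffAt z₀ hz₀).continuousAt hs hpq hPan hP₀ hP') hf hfh

end IsConformalFactorOn

theorem isConformalFactorOn_wirtingerZbar_wirtingerZ {f : ℂ → ℂ} {U : Set ℂ} (hU : IsOpen U)
    (hf : ∀ z ∈ U, ContDiffAt ℝ ∞ f z) (hreal : ∀ z ∈ U, conj (f z) = f z)
    (hne : ∀ z ∈ U, wirtingerZbar (wirtingerZ f) z ≠ 0) :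
    IsConformalFactorOn (wirtingerZbar (wirtingerZ f)) U where
  isOpen := hU
  contDiffAt z hz := contDiffAt_wirtingerZbar (contDiffAt_wirtingerZ (hf z hz) le_rfl) le_rfl
  conj_eq z hz := by
    have hconj : wirtingerZbar f =ᶠ[𝓝 z] fun w => conj (wirtingerZ f w) := by
      filter_upwards [hU.mem_nhds hz] with w hw
      exact (HasWirtingerDerivAt.of_differentiableAt
        ((hf w hw).differentiableAt (by simp))).eq_conj_of_conj_eq
          (eventually_of_mem (hU.mem_nhds hw) hreal)
    have hZ := HasWirtingerDerivAt.of_differentiableAt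
      ((contDiffAt_wirtingerZ (m := ∞) (hf z hz) le_rfl).differentiableAt (by simp))
    rw [← (hZ.star.congr_of_eventuallyEq hconj).wirtingerZ_eq,
      wirtingerZ_wirtingerZbar_comm (contDiffAt_infty.1 (hf z hz) 2)]
  ne_zero := hne

end ConformalMetric

/-- Let `F` be a `C^∞`-smooth real-valued function on an open set `U ⊆ ℂ` with `F_{zz̄}`
nowhere vanishing on `U`, and suppose `μ := F_{zz̄z̄} / F_{zz̄}` satisfies Loboda's
zero CR-curvature equation `μ_{zz̄z̄} - 3 μ_{zz̄} μ + 2 μ_z μ² - μ_z μ_z̄ = 0` on `U`.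
Then `F` is real-analytic on `U`.  (Theorem 1.1 via Remark 1.2.) -/
theorem loboda_spherical_graphing_function_is_real_analytic
    (U : Set ℂ) (hU : IsOpen U)
    (F : ℂ → ℝ) (hF : ContDiffOn ℝ (⊤ : ℕ∞) F U)
    (hnv : ∀ z ∈ U, wirtingerZbar (wirtingerZ (fun w => (F w : ℂ))) z ≠ 0)
    (μ : ℂ → ℂ)
    (hμ : μ = fun z =>
      wirtingerZbar (wirtingerZbar (wirtingerZ (fun w => (F w : ℂ)))) z /
        wirtingerZbar (wirtingerZ (fun w => (F w : ℂ))) z)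
    (heq : ∀ z ∈ U,
      wirtingerZbar (wirtingerZbar (wirtingerZ μ)) z
        - 3 * wirtingerZbar (wirtingerZ μ) z * μ z
        + 2 * wirtingerZ μ z * (μ z) ^ 2
        - wirtingerZ μ z * wirtingerZbar μ z = 0) :
    AnalyticOnNhd ℝ F U := by
  subst hμ
  have hf : ∀ z ∈ U, ContDiffAt ℝ (⊤ : ℕ∞) (fun w => (F w : ℂ)) z := fun z hz =>
    ofRealCLM.contDiff.contDiffAt.comp z (hF.contDiffAt (hU.mem_nhds hz))
  have hh := isConformalFactorOn_wirtingerZbar_wirtingerZ hU hf (fun _ _ => conj_ofReal _) hnv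
  have hext z (hz : z ∈ U) := hh.differentiableAt_curvatureGradient_of_loboda hz (heq z hz)
  intro z₀ hz₀
  have hFan : AnalyticAt ℝ (fun w => (F w : ℂ)) z₀ :=
    hh.analyticAt_potential hext hz₀ (contDiffAt_infty.1 (hf z₀ hz₀) 2) (.of_forall fun _ => rfl)
  simpa [Function.comp_def] using (reCLM.analyticAt _).comp hFan
end

section
/- Let D = {z ∈ ℂ : |z| < 1} and define F : D → ℝ by F(z) := arcsin(|z|²). Then F is C^∞-smooth on D, and at every point of D it satisfies F_{zz} = z·(F_z)³ and F_{zz̄} = (1 − |z|⁴)^{−1/2} + |z|⁴·(1 − |z|⁴)^{−3/2}; in particular F_{zz̄} > 0 on D. -/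
open Complex

/-!
For a function `F(z) = φ(|z|²)` the Wirtinger chain and product rules give `F_z = φ'(|z|²) z̄`,
`F_zz = φ''(|z|²) z̄²` and `F_zz̄ = φ'(|z|²) + |z|² φ''(|z|²)`. Hence `F_zz = z (F_z)³` as soon as
`φ'' = t (φ')³`, and this ordinary differential equation is satisfied by
`arcsin' = (1 - t²)^(-1/2)`.
-/

open Filter Topology ComplexConjugate

section WirtingerCalculus

variable {f g : ℂ → ℂ} {z : ℂ}

theorem wirtingerZ_congr (h : f =ᶠ[𝓝 z] g) : wirtingerZ f z = wirtingerZ g z := by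
  simp only [wirtingerZ, h.fderiv_eq]

theorem wirtingerZbar_congr (h : f =ᶠ[𝓝 z] g) : wirtingerZbar f z = wirtingerZbar g z := by
  simp only [wirtingerZbar, h.fderiv_eq]

theorem wirtingerZ_mul (hf : DifferentiableAt ℝ f z) (hg : DifferentiableAt ℝ g z) :
    wirtingerZ (fun w => f w * g w) z = wirtingerZ f z * g z + f z * wirtingerZ g z := by
  simp only [wirtingerZ, fderiv_fun_mul hf hg, add_apply, smul_apply, smul_eq_mul]
  ring

theorem wirtingerZbar_mul (hf : DifferentiableAt ℝ f z) (hg : DifferentiableAt ℝ g z) :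
    wirtingerZbar (fun w => f w * g w) z = wirtingerZbar f z * g z + f z * wirtingerZbar g z := by
  simp only [wirtingerZbar, fderiv_fun_mul hf hg, add_apply, smul_apply, smul_eq_mul]
  ring

theorem fderiv_conj_apply (v : ℂ) : fderiv ℝ (fun w : ℂ => conj w) z v = conj v :=
  congrArg (fun L : ℂ →L[ℝ] ℂ => L v) conjCLE.hasFDerivAt.fderiv

theorem wirtingerZ_conj : wirtingerZ (fun w => conj w) z = 0 := by
  simp [wirtingerZ, fderiv_conj_apply]

theorem wirtingerZbar_conj : wirtingerZbar (fun w => conj w) z = 1 := by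
  simp [wirtingerZbar, fderiv_conj_apply, one_add_one_eq_two]

end WirtingerCalculus

section RadialFunctions

variable {φ φ' : ℝ → ℝ} {c : ℝ} {z : ℂ}

theorem hasFDerivAt_ofReal_comp_norm_sq (hφ : HasDerivAt φ c (‖z‖ ^ 2)) :
    HasFDerivAt (fun w : ℂ => (φ (‖w‖ ^ 2) : ℂ)) (ofRealCLM.comp (c • 2 • innerSL ℝ z)) z :=
  ofRealCLM.hasFDerivAt.comp z
    (hφ.comp_hasFDerivAt z (hasStrictFDerivAt_norm_sq z).hasFDerivAt)

theorem ofReal_two_mul_inner (z v : ℂ) :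
    ((2 * inner ℝ z v : ℝ) : ℂ) = conj z * v + z * conj v := by
  rw [Complex.inner, ← add_conj, map_mul, conj_conj, mul_comm v, mul_comm z]

theorem fderiv_ofReal_comp_norm_sq_apply (hφ : HasDerivAt φ c (‖z‖ ^ 2)) (v : ℂ) :
    fderiv ℝ (fun w : ℂ => (φ (‖w‖ ^ 2) : ℂ)) z v = c * (conj z * v + z * conj v) := by
  rw [(hasFDerivAt_ofReal_comp_norm_sq hφ).fderiv, ← ofReal_two_mul_inner]
  simp [mul_add]

theorem wirtingerZ_comp_norm_sq (hφ : HasDerivAt φ c (‖z‖ ^ 2)) :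
    wirtingerZ (fun w => (φ (‖w‖ ^ 2) : ℂ)) z = c * conj z := by
  simp only [wirtingerZ, fderiv_ofReal_comp_norm_sq_apply hφ, map_one, conj_I]
  linear_combination (c * (z - conj z) / 2 : ℂ) * I_sq

theorem wirtingerZbar_comp_norm_sq (hφ : HasDerivAt φ c (‖z‖ ^ 2)) :
    wirtingerZbar (fun w => (φ (‖w‖ ^ 2) : ℂ)) z = c * z := by
  simp only [wirtingerZbar, fderiv_ofReal_comp_norm_sq_apply hφ, map_one, conj_I]
  linear_combination (c * (conj z - z) / 2 : ℂ) * I_sq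

theorem wirtingerZ_comp_norm_sq_eventuallyEq
    (hφ : ∀ᶠ t in 𝓝 (‖z‖ ^ 2), HasDerivAt φ (φ' t) t) :
    wirtingerZ (fun w => (φ (‖w‖ ^ 2) : ℂ)) =ᶠ[𝓝 z] fun w => φ' (‖w‖ ^ 2) * conj w := by
  have norm_sq_tendsto : Tendsto (fun w : ℂ => ‖w‖ ^ 2) (𝓝 z) (𝓝 (‖z‖ ^ 2)) :=
    (continuous_norm.pow 2).tendsto z
  exact (norm_sq_tendsto.eventually hφ).mono fun _ => wirtingerZ_comp_norm_sq

theorem wirtingerZ_wirtingerZ_comp_norm_sq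
    (hφ : ∀ᶠ t in 𝓝 (‖z‖ ^ 2), HasDerivAt φ (φ' t) t) (hφ' : HasDerivAt φ' c (‖z‖ ^ 2)) :
    wirtingerZ (wirtingerZ fun w => (φ (‖w‖ ^ 2) : ℂ)) z = c * conj z ^ 2 := by
  rw [wirtingerZ_congr (wirtingerZ_comp_norm_sq_eventuallyEq hφ),
    wirtingerZ_mul (hasFDerivAt_ofReal_comp_norm_sq hφ').differentiableAt (differentiable_conj z),
    wirtingerZ_comp_norm_sq hφ', wirtingerZ_conj]
  ring

theorem wirtingerZbar_wirtingerZ_comp_norm_sq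
    (hφ : ∀ᶠ t in 𝓝 (‖z‖ ^ 2), HasDerivAt φ (φ' t) t) (hφ' : HasDerivAt φ' c (‖z‖ ^ 2)) :
    wirtingerZbar (wirtingerZ fun w => (φ (‖w‖ ^ 2) : ℂ)) z =
      ((φ' (‖z‖ ^ 2) + ‖z‖ ^ 2 * c : ℝ) : ℂ) := by
  rw [wirtingerZbar_congr (wirtingerZ_comp_norm_sq_eventuallyEq hφ),
    wirtingerZbar_mul (hasFDerivAt_ofReal_comp_norm_sq hφ').differentiableAt
      (differentiable_conj z),
    wirtingerZbar_comp_norm_sq hφ', wirtingerZbar_conj, mul_assoc, mul_conj']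
  push_cast
  ring

theorem wirtingerZ_wirtingerZ_comp_norm_sq_eq_mul_cube
    (hφ : ∀ᶠ t in 𝓝 (‖z‖ ^ 2), HasDerivAt φ (φ' t) t)
    (hφ' : HasDerivAt φ' (‖z‖ ^ 2 * φ' (‖z‖ ^ 2) ^ 3) (‖z‖ ^ 2)) :
    wirtingerZ (wirtingerZ fun w => (φ (‖w‖ ^ 2) : ℂ)) z =
      z * wirtingerZ (fun w => (φ (‖w‖ ^ 2) : ℂ)) z ^ 3 := by
  rw [wirtingerZ_wirtingerZ_comp_norm_sq hφ hφ', wirtingerZ_comp_norm_sq hφ.self_of_nhds]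
  push_cast
  rw [← mul_conj' z]
  ring

end RadialFunctions

section Arcsin

variable {t : ℝ}

theorem one_sub_sq_pos_of_mem_Ioo (ht : t ∈ Set.Ioo (-1) 1) : 0 < 1 - t ^ 2 :=
  sub_pos.2 ((sq_lt_one_iff_abs_lt_one t).2 (abs_lt.2 ht))

theorem hasDerivAt_arcsin_rpow (ht : t ∈ Set.Ioo (-1) 1) :
    HasDerivAt Real.arcsin ((1 - t ^ 2) ^ (-(1 / 2) : ℝ)) t := by
  rw [Real.rpow_neg (one_sub_sq_pos_of_mem_Ioo ht).le, ← Real.sqrt_eq_rpow, ← one_div]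
  exact Real.hasDerivAt_arcsin ht.1.ne' ht.2.ne

theorem rpow_neg_half_pow_three {x : ℝ} (hx : 0 ≤ x) :
    (x ^ (-(1 / 2) : ℝ)) ^ 3 = x ^ (-(3 / 2) : ℝ) := by
  rw [← Real.rpow_mul_natCast hx]
  norm_num

theorem hasDerivAt_one_sub_sq_rpow_neg_half (ht : t ∈ Set.Ioo (-1) 1) :
    HasDerivAt (fun x : ℝ => (1 - x ^ 2) ^ (-(1 / 2) : ℝ))
      (t * ((1 - t ^ 2) ^ (-(1 / 2) : ℝ)) ^ 3) t := by
  have hpos := one_sub_sq_pos_of_mem_Ioo ht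
  have base_deriv : HasDerivAt (fun x : ℝ => 1 - x ^ 2) (-(2 * t)) t := by
    simpa using (hasDerivAt_pow 2 t).const_sub 1
  refine (base_deriv.rpow_const (.inl hpos.ne')).congr_deriv ?_
  rw [rpow_neg_half_pow_three hpos.le, show (-(1 / 2) - 1 : ℝ) = -(3 / 2) by norm_num]
  ring

theorem norm_sq_mem_Ioo_of_mem_ball {E : Type*} [SeminormedAddCommGroup E] {x : E}
    (hx : x ∈ Metric.ball (0 : E) 1) : ‖x‖ ^ 2 ∈ Set.Ioo (-1 : ℝ) 1 :=
  ⟨by linarith [sq_nonneg ‖x‖],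
    pow_lt_one₀ (norm_nonneg x) (mem_ball_zero_iff.1 hx) two_ne_zero⟩

theorem contDiffOn_arcsin_norm_sq {E : Type*} [NormedAddCommGroup E] [InnerProductSpace ℝ E]
    {n : WithTop ℕ∞} :
    ContDiffOn ℝ n (fun x : E => Real.arcsin (‖x‖ ^ 2)) (Metric.ball 0 1) := fun x hx =>
  have hx' := norm_sq_mem_Ioo_of_mem_ball hx
  ((Real.contDiffAt_arcsin hx'.1.ne' hx'.2.ne).comp x
    (contDiff_norm_sq ℝ).contDiffAt).contDiffWithinAt

end Arcsin

/-- The graphing function `F(z) = arcsin(|z|²)` of the rigid hypersurface `sin u = |z|²`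
is `C^∞`-smooth on the unit disc, satisfies the zero CR-curvature equation
`F_zz = z (F_z)³`, and has Levi form
`F_{zz̄} = (1-|z|⁴)^{-1/2} + |z|⁴ (1-|z|⁴)^{-3/2} > 0`. -/
theorem arcsin_normSq_spherical_and_levi_nondegenerate :
    ContDiffOn ℝ (⊤ : ℕ∞) (fun z : ℂ => Real.arcsin (‖z‖ ^ 2)) (Metric.ball (0 : ℂ) 1) ∧
    ∀ z ∈ Metric.ball (0 : ℂ) 1,
      wirtingerZ (wirtingerZ (fun w : ℂ => (Real.arcsin (‖w‖ ^ 2) : ℂ))) z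
        = z * (wirtingerZ (fun w : ℂ => (Real.arcsin (‖w‖ ^ 2) : ℂ)) z) ^ 3 ∧
      wirtingerZbar (wirtingerZ (fun w : ℂ => (Real.arcsin (‖w‖ ^ 2) : ℂ))) z
        = (((1 - ‖z‖ ^ 4) ^ (-(1 / 2) : ℝ)
            + ‖z‖ ^ 4 * (1 - ‖z‖ ^ 4) ^ (-(3 / 2) : ℝ) : ℝ) : ℂ) ∧
      0 < (1 - ‖z‖ ^ 4) ^ (-(1 / 2) : ℝ)
            + ‖z‖ ^ 4 * (1 - ‖z‖ ^ 4) ^ (-(3 / 2) : ℝ) := by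
  refine ⟨contDiffOn_arcsin_norm_sq, fun z hz => ?_⟩
  have ht := norm_sq_mem_Ioo_of_mem_ball hz
  have arcsin_deriv : ∀ᶠ t in 𝓝 (‖z‖ ^ 2),
      HasDerivAt Real.arcsin ((1 - t ^ 2) ^ (-(1 / 2) : ℝ)) t :=
    (isOpen_Ioo.eventually_mem ht).mono fun _ => hasDerivAt_arcsin_rpow
  have arcsin_deriv_deriv := hasDerivAt_one_sub_sq_rpow_neg_half ht
  have norm_sq_sq : (‖z‖ ^ 2) ^ 2 = ‖z‖ ^ 4 := by ring
  have hpos : 0 < 1 - ‖z‖ ^ 4 := norm_sq_sq ▸ one_sub_sq_pos_of_mem_Ioo ht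
  refine ⟨wirtingerZ_wirtingerZ_comp_norm_sq_eq_mul_cube arcsin_deriv arcsin_deriv_deriv, ?_,
    by positivity⟩
  rw [wirtingerZbar_wirtingerZ_comp_norm_sq arcsin_deriv arcsin_deriv_deriv, norm_sq_sq,
    rpow_neg_half_pow_three hpos.le, ← mul_assoc, ← sq, norm_sq_sq]
end
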